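/- Let E, F, G be real constants with F² + E·G > 0 and Q(u,v) = -E·u² + 2·F·u·v + G·v². Then E < 0 if and only if there is no C¹ curve c : [0,1] → ℝ² with continuous nowhere-vanishing derivative such that Q(c'(t)) ≤ 0 for all t and c(1) - c(0) = (n,0) for some integer n. (That is: the flat Lorentzian cylinder is causal, i.e. admits no closed causal curve, exactly when the fundamental vector field ∂x is spacelike; when E = 0 the circle t ↦ (x₀+t, y₀) is a closed lightlike curve and when E > 0 it is a closed timelike curve.) -/

import Mathlib

/-- The quadratic form of the flat Lorentzian metric `g = -E dx² + 2F dx dy + G dy²`. -/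
def Qform (E F G : ℝ) (p : ℝ × ℝ) : ℝ :=
  -E * p.1 ^ 2 + 2 * F * p.1 * p.2 + G * p.2 ^ 2

/-!
If `∂x` is spacelike, a nonzero causal vector is never horizontal, so by Rolle's theorem the
`y`-coordinate is injective along a causal curve, which therefore cannot close up. Otherwise the
horizontal circle is itself a closed causal curve.
-/

open Set

theorem injOn_of_hasDerivWithinAt_ne_zero {f f' : ℝ → ℝ} {s : Set ℝ} (hs : s.OrdConnected)
    (hf : ∀ t ∈ s, HasDerivWithinAt f (f' t) s t) (hf' : ∀ t ∈ s, f' t ≠ 0) : InjOn f s := by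
  intro a ha b hb hab
  wlog hle : a ≤ b generalizing a b
  · exact (this hb ha hab.symm (le_of_not_ge hle)).symm
  by_contra hne
  have hIcc : Icc a b ⊆ s := hs.out ha hb
  have hcont : ContinuousOn f (Icc a b) :=
    fun t ht => (hf t (hIcc ht)).continuousWithinAt.mono hIcc
  have hderiv : ∀ t ∈ Ioo a b, HasDerivAt f (f' t) t := fun t ht =>
    (hf t (hIcc (Ioo_subset_Icc_self ht))).hasDerivAt
      (Filter.mem_of_superset (Icc_mem_nhds ht.1 ht.2) hIcc)
  obtain ⟨t, ht, hzero⟩ := exists_hasDerivAt_eq_zero (lt_of_le_of_ne hle hne) hcont hab hderiv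
  exact hf' t (hIcc (Ioo_subset_Icc_self ht)) hzero

section Causality

variable {E F G : ℝ}

theorem Qform_horizontal (u : ℝ) : Qform E F G (u, 0) = -E * u ^ 2 := by
  simp [Qform]

theorem snd_ne_zero_of_Qform_nonpos (hE : E < 0) {p : ℝ × ℝ} (hp : p ≠ 0)
    (hQ : Qform E F G p ≤ 0) : p.2 ≠ 0 := by
  obtain ⟨u, v⟩ := p
  rintro rfl
  have hu : u ≠ 0 := by simpa using hp
  rw [Qform_horizontal] at hQ
  exact hQ.not_gt (mul_pos (neg_pos.mpr hE) (by positivity))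

theorem injOn_snd_of_Qform_nonpos (hE : E < 0) {c c' : ℝ → ℝ × ℝ} {s : Set ℝ}
    (hs : s.OrdConnected) (hc : ∀ t ∈ s, HasDerivWithinAt c (c' t) s t)
    (hne : ∀ t ∈ s, c' t ≠ 0) (hQ : ∀ t ∈ s, Qform E F G (c' t) ≤ 0) :
    InjOn (fun t => (c t).2) s :=
  injOn_of_hasDerivWithinAt_ne_zero hs (fun t ht => (hc t ht).snd)
    fun t ht => snd_ne_zero_of_Qform_nonpos hE (hne t ht) (hQ t ht)

end Causality

theorem stmt_12_general (E F G : ℝ) :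
    E < 0 ↔
      ¬ ∃ c c' : ℝ → ℝ × ℝ,
        (∀ t ∈ Set.Icc (0 : ℝ) 1, HasDerivAt c (c' t) t) ∧
        ContinuousOn c' (Set.Icc (0 : ℝ) 1) ∧
        (∀ t ∈ Set.Icc (0 : ℝ) 1, c' t ≠ 0) ∧
        (∀ t ∈ Set.Icc (0 : ℝ) 1, Qform E F G (c' t) ≤ 0) ∧
        ∃ n : ℤ, c 1 - c 0 = ((n : ℝ), 0) := by
  constructor
  · rintro hE ⟨c, c', hc, -, hne, hQ, n, hn⟩
    have hinj : InjOn (fun t => (c t).2) (Icc 0 1) :=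
      injOn_snd_of_Qform_nonpos hE ordConnected_Icc (fun t ht => (hc t ht).hasDerivWithinAt) hne hQ
    have hends : (c 1).2 = (c 0).2 := sub_eq_zero.mp (congrArg Prod.snd hn)
    exact one_ne_zero (hinj (right_mem_Icc.mpr zero_le_one) (left_mem_Icc.mpr zero_le_one) hends)
  · contrapose!
    intro hE
    have hcircle (t : ℝ) : HasDerivAt (fun s : ℝ => (s, (0 : ℝ))) (1, 0) t :=
      (hasDerivAt_id t).prodMk (hasDerivAt_const t 0)
    have hcausal : Qform E F G (1, 0) ≤ 0 := by
      simpa only [Qform_horizontal, one_pow, mul_one, neg_nonpos] using hE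
    exact ⟨fun t => (t, 0), fun _ => (1, 0), fun t _ => hcircle t, continuousOn_const,
      fun _ _ => by simp, fun _ _ => hcausal, 1, by simp⟩

/-- The flat Lorentzian cylinder is causal (admits no closed causal curve) if and only
if the fundamental vector field `∂x` is spacelike, i.e. `E < 0`. -/
theorem stmt_12 (E F G : ℝ) (hLor : F ^ 2 + E * G > 0) :
    E < 0 ↔
      ¬ ∃ c c' : ℝ → ℝ × ℝ,
        (∀ t ∈ Set.Icc (0 : ℝ) 1, HasDerivAt c (c' t) t) ∧
        ContinuousOn c' (Set.Icc (0 : ℝ) 1) ∧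
        (∀ t ∈ Set.Icc (0 : ℝ) 1, c' t ≠ 0) ∧
        (∀ t ∈ Set.Icc (0 : ℝ) 1, Qform E F G (c' t) ≤ 0) ∧
        ∃ n : ℤ, c 1 - c 0 = ((n : ℝ), 0) :=
  stmt_12_general E F G
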